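/- Fix N ≥ 1, q ∈ [0,1], and m ∈ ℝ^N with ‖m‖₂² = N q. Define the Taylor remainder H_N^m(v) := H_N(m + v) − H_N(m) − ⟨∇H_N(m), v⟩ for v ∈ ℝ^N. Then for all v¹, v² ∈ ℝ^N with ⟨v¹, m⟩ = ⟨v², m⟩ = 0, the random variable H_N^m(v) is centered Gaussian and E[ H_N^m(v¹) H_N^m(v²) ] = N ( ξ( q + ⟨v¹, v²⟩/N ) − ξ(q) − ξ'(q) ⟨v¹, v²⟩/N ). -/

import Mathlib

open MeasureTheory ProbabilityTheory Filter
open scoped ENNReal NNReal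

noncomputable section

/-- Euclidean dot product on `ℝ^N`. -/
def dotp {N : ℕ} (σ τ : Fin N → ℝ) : ℝ := ∑ i, σ i * τ i

/-- The sphere `S_N = {σ : ‖σ‖₂² = N}`. -/
def sphereSet (N : ℕ) : Set (Fin N → ℝ) := {σ | ∑ i, (σ i) ^ 2 = (N : ℝ)}

/-- The mixture `ξ(x) = Σ_{k=2}^P c_k² x^k`. -/
def xiFun (P : ℕ) (c : ℕ → ℝ) (x : ℝ) : ℝ := ∑ k ∈ Finset.Icc 2 P, (c k) ^ 2 * x ^ k

/-- `ξ'`. -/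
def xiD1 (P : ℕ) (c : ℕ → ℝ) (x : ℝ) : ℝ :=
  ∑ k ∈ Finset.Icc 2 P, (k : ℝ) * (c k) ^ 2 * x ^ (k - 1)

/-- `ξ''`. -/
def xiD2 (P : ℕ) (c : ℕ → ℝ) (x : ℝ) : ℝ :=
  ∑ k ∈ Finset.Icc 2 P, (k : ℝ) * ((k : ℝ) - 1) * (c k) ^ 2 * x ^ (k - 2)

/-- The mixed p-spin Hamiltonian built from couplings `g`. -/
def hamiltonian (N P : ℕ) (c : ℕ → ℝ) (g : (k : ℕ) → (Fin k → Fin N) → ℝ)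
    (σ : Fin N → ℝ) : ℝ :=
  ∑ k ∈ Finset.Icc 2 P, c k * (N : ℝ) ^ (-(((k : ℝ) - 1) / 2)) *
    ∑ j : Fin k → Fin N, g k j * ∏ i, σ (j i)

/-- Index set for the entries of all the coupling tensors. -/
abbrev GIdx (N P : ℕ) : Type := Σ k : {k : ℕ // k ∈ Finset.Icc 2 P}, (Fin (k : ℕ) → Fin N)

/-- Flatten the couplings into a single Gaussian vector. -/
def flatten (N P : ℕ) (g : (k : ℕ) → (Fin k → Fin N) → ℝ) : GIdx N P → ℝ :=
  fun i => g i.1 i.2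

/-- The couplings `(G^{(k)})_{2 ≤ k ≤ P}` are i.i.d. standard Gaussians. -/
def StdGaussianCouplings {Ω : Type*} [MeasureSpace Ω] (N P : ℕ)
    (G : Ω → (k : ℕ) → (Fin k → Fin N) → ℝ) : Prop :=
  Measure.map (fun ω => flatten N P (G ω)) ℙ = Measure.pi fun _ : GIdx N P => gaussianReal 0 1

/-- The maximum of the Hamiltonian over the sphere. -/
def maxH (N P : ℕ) (c : ℕ → ℝ) (g : (k : ℕ) → (Fin k → Fin N) → ℝ) : ℝ :=
  ⨆ σ : sphereSet N, hamiltonian N P c g σ.1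


/-- Euclidean gradient of the Hamiltonian. -/
def gradH (N P : ℕ) (c : ℕ → ℝ) (g : (k : ℕ) → (Fin k → Fin N) → ℝ)
    (σ : Fin N → ℝ) : Fin N → ℝ :=
  fun i => fderiv ℝ (hamiltonian N P c g) σ (Pi.single i 1)

/-- Euclidean Hessian of the Hamiltonian, as a bilinear form. -/
def hessH (N P : ℕ) (c : ℕ → ℝ) (g : (k : ℕ) → (Fin k → Fin N) → ℝ)
    (σ v w : Fin N → ℝ) : ℝ :=
  fderiv ℝ (fun τ => fderiv ℝ (hamiltonian N P c g) τ w) σ v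

/-- `σ` is a spherical critical point: `∇H(σ) = (⟨∇H(σ),σ⟩/N) σ`. -/
def IsCritPt (N P : ℕ) (c : ℕ → ℝ) (g : (k : ℕ) → (Fin k → Fin N) → ℝ)
    (σ : Fin N → ℝ) : Prop :=
  σ ∈ sphereSet N ∧ gradH N P c g σ = (dotp (gradH N P c g σ) σ / N) • σ

/-- Cardinality of a set, valued in `ℝ≥0∞`. -/
def ecount {α : Type*} (s : Set α) : ℝ≥0∞ := ∑' _ : s, 1

/-- Spherical critical points with energy at least `Nη`. -/
def crtSet (N P : ℕ) (c : ℕ → ℝ) (g : (k : ℕ) → (Fin k → Fin N) → ℝ)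
    (η : ℝ) : Set (Fin N → ℝ) :=
  {σ | IsCritPt N P c g σ ∧ (N : ℝ) * η ≤ hamiltonian N P c g σ}

/-- Index (number of negative eigenvalues) of the spherical Hessian quadratic form at `σ`:
maximal dimension of a subspace of the tangent space on which the form is negative definite. -/
def critIndex (N P : ℕ) (c : ℕ → ℝ) (g : (k : ℕ) → (Fin k → Fin N) → ℝ)
    (σ : Fin N → ℝ) : ℕ :=
  sSup {d : ℕ | ∃ W : Submodule ℝ (Fin N → ℝ), Module.finrank ℝ W = d ∧
    (∀ v ∈ W, dotp v σ = 0) ∧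
    ∀ v ∈ W, v ≠ 0 →
      hessH N P c g σ v v - (dotp (gradH N P c g σ) σ / N) * ∑ i, (v i) ^ 2 < 0}

/-- Critical points of index `N-1-k` in the superlevel set. -/
def crtSetIdx (N P : ℕ) (c : ℕ → ℝ) (g : (k : ℕ) → (Fin k → Fin N) → ℝ)
    (η : ℝ) (k : ℕ) : Set (Fin N → ℝ) :=
  {σ | σ ∈ crtSet N P c g η ∧ critIndex N P c g σ = N - 1 - k}

/-- Coefficients of the pure p-spin model. -/
def pureC (p : ℕ) : ℕ → ℝ := fun k => if k = p then 1 else 0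

/-- The uniform probability measure on the sphere `S_N`. -/
def sphereUniform (N : ℕ) : Measure (Fin N → ℝ) :=
  Measure.map (fun g i => Real.sqrt N * g i / Real.sqrt (∑ j, (g j) ^ 2))
    (Measure.pi fun _ : Fin N => gaussianReal 0 1)

/-- The band around `m`. -/
def band (N : ℕ) (m : Fin N → ℝ) (δ : ℝ) : Set (Fin N → ℝ) :=
  {σ | σ ∈ sphereSet N ∧ |dotp (σ - m) m| < N * δ}

/-- `k`-tuples from the band with pairwise overlaps close to `⟨m,m⟩`. -/
def bandK (N k : ℕ) (m : Fin N → ℝ) (δ ε : ℝ) : Set (Fin k → Fin N → ℝ) :=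
  {σs | (∀ i, σs i ∈ band N m δ) ∧
    ∀ i j, i ≠ j → |dotp (σs i) (σs j) - dotp m m| < N * ε}

/-- `∫₀ᵗ γ(s) ds`, valued in `ℝ≥0∞`. -/
def gammaLInt (γ : ℝ → ℝ) (t : ℝ) : ℝ≥0∞ := ∫⁻ s in Set.Ioo 0 t, ENNReal.ofReal (γ s)

/-- The zero-temperature spherical Parisi functional (Crisanti–Sommers form), with the
convention `1/0 = +∞`. -/
def PFunE (P : ℕ) (c : ℕ → ℝ) (γ : ℝ → ℝ) : ℝ≥0∞ :=
  ⨅ L ∈ {L : ℝ | gammaLInt γ 1 ≤ ENNReal.ofReal L},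
    (∫⁻ t in Set.Ioo (0 : ℝ) 1,
      (ENNReal.ofReal (xiD2 P c t * (L - (gammaLInt γ t).toReal))
        + (ENNReal.ofReal (L - (gammaLInt γ t).toReal))⁻¹)) / 2

/-- The space `𝒰` of order parameters: non-decreasing, non-negative, integrable on `[0,1)`. -/
def calU : Set (ℝ → ℝ) :=
  {γ | (∀ t ∈ Set.Ico (0 : ℝ) 1, 0 ≤ γ t) ∧ MonotoneOn γ (Set.Ico 0 1) ∧
    IntegrableOn γ (Set.Ioo 0 1)}

/-- The support of `γ`: points of `[0,1]` near which `γ` is not constant. -/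
def suppGamma (γ : ℝ → ℝ) : Set ℝ :=
  {q | q ∈ Set.Icc (0 : ℝ) 1 ∧ ∀ ε > 0, ∃ s ∈ Set.Ico (0 : ℝ) 1, ∃ t ∈ Set.Ico (0 : ℝ) 1,
    |s - q| < ε ∧ |t - q| < ε ∧ γ s ≠ γ t}

/-- The superlevel set `L_N(η)`. -/
def levelSet (N P : ℕ) (c : ℕ → ℝ) (g : (k : ℕ) → (Fin k → Fin N) → ℝ)
    (η : ℝ) : Set (Fin N → ℝ) :=
  {σ | σ ∈ sphereSet N ∧ (N : ℝ) * η ≤ hamiltonian N P c g σ}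

/-- Threshold energy of the pure p-spin model. -/
def THRp (p : ℕ) : ℝ := 2 * Real.sqrt (((p : ℝ) - 1) / p)

/-- The function `J` of the pure p-spin complexity. -/
def Jp (p : ℕ) (η : ℝ) : ℝ :=
  η / (THRp p) ^ 2 * Real.sqrt (η ^ 2 - (THRp p) ^ 2)
    - Real.log (η + Real.sqrt (η ^ 2 - (THRp p) ^ 2)) + Real.log (THRp p)

/-- The annealed complexity of the pure p-spin spherical model. -/
def SigmaPure (p : ℕ) (η : ℝ) : ℝ :=
  if η ≤ 0 then Real.log ((p : ℝ) - 1) / 2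
  else if η ≤ THRp p then
    Real.log ((p : ℝ) - 1) / 2 - ((p : ℝ) - 2) / (4 * ((p : ℝ) - 1)) * η ^ 2
  else Real.log ((p : ℝ) - 1) / 2 - ((p : ℝ) - 2) / (4 * ((p : ℝ) - 1)) * η ^ 2 - Jp p η

/-- Couplings, unflattened from a vector indexed by `GIdx N P`. -/
def unflatten (N P : ℕ) (g : GIdx N P → ℝ) : (k : ℕ) → (Fin k → Fin N) → ℝ :=
  fun k j => if h : k ∈ Finset.Icc 2 P then g ⟨⟨k, h⟩, j⟩ else 0

/-- `ξ'''`. -/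
def xiD3 (P : ℕ) (c : ℕ → ℝ) (x : ℝ) : ℝ :=
  ∑ k ∈ Finset.Icc 2 P, (k : ℝ) * ((k : ℝ) - 1) * ((k : ℝ) - 2) * (c k) ^ 2 * x ^ (k - 3)

/-
By linearity in the couplings, `H_N(σ) = Σ_i g_i φ_i(σ)` with `g` a standard Gaussian vector, so
the Taylor remainder of `H_N` at `m` in direction `v` is `Σ_i g_i R φ_i(v)`, where `R` denotes the
first-order remainder. It is therefore centered Gaussian, and its covariance
`Σ_i R φ_i(v₁) R φ_i(v₂)` is obtained by applying `R` once in each variable to the kernel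
`Σ_i φ_i(x) φ_i(y) = N ξ(⟨x, y⟩ / N)`. When `v₁` is orthogonal to `m`, the remainder in `x` vanishes
at `y = m`; when `v₂` is too, so does its derivative at `y = m` in the direction `v₂`, so that only
its value at `y = m + v₂` survives.
-/

section TaylorRemainder

variable {E F : Type*} [NormedAddCommGroup E] [NormedSpace ℝ E]
  [NormedAddCommGroup F] [NormedSpace ℝ F]

/-- The remainder of the first-order Taylor expansion of `f` at `m`, as a function of the
displacement `v`; for `f = H_N` it is the field `H_N^m(v)` of the paper. -/
def taylorRemainder (f : E → ℝ) (m v : E) : ℝ :=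
  f (m + v) - f m - fderiv ℝ f m v

lemma taylorRemainder_sum_mul {ι : Type*} [Fintype ι] {f : ι → E → ℝ} {m : E}
    (hf : ∀ i, DifferentiableAt ℝ (f i) m) (a : ι → ℝ) (v : E) :
    taylorRemainder (fun x => ∑ i, a i * f i x) m v = ∑ i, a i * taylorRemainder (f i) m v := by
  have hfderiv : fderiv ℝ (fun x => ∑ i, a i * f i x) m v = ∑ i, a i * fderiv ℝ (f i) m v := by
    rw [fderiv_fun_sum fun i _ => (hf i).const_mul (a i)]
    simp [fderiv_const_mul, hf]
  simp only [taylorRemainder, hfderiv, mul_sub, Finset.sum_sub_distrib]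

lemma sum_taylorRemainder_mul_taylorRemainder {ι : Type*} [Fintype ι] {f : ι → E → ℝ}
    {g : ι → F → ℝ} {m : E} {n : F} (hf : ∀ i, DifferentiableAt ℝ (f i) m)
    (hg : ∀ i, DifferentiableAt ℝ (g i) n) (v : E) (w : F) :
    ∑ i, taylorRemainder (f i) m v * taylorRemainder (g i) n w
      = taylorRemainder (fun y => taylorRemainder (fun x => ∑ i, f i x * g i y) m v) n w := by
  simp_rw [mul_comm (f _ _), taylorRemainder_sum_mul hf, mul_comm (g _ _),
    taylorRemainder_sum_mul hg]

lemma taylorRemainder_comp_clm {f : ℝ → ℝ} {f' : ℝ} (L : E →L[ℝ] ℝ) {m : E}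
    (hf : HasDerivAt f f' (L m)) (v : E) :
    taylorRemainder (fun x => f (L x)) m v = f (L m + L v) - f (L m) - f' * L v := by
  have hfderiv : fderiv ℝ (fun x => f (L x)) m = f' • L :=
    (hf.comp_hasFDerivAt m L.hasFDerivAt).fderiv
  simp [taylorRemainder, hfderiv]

lemma taylorRemainder_taylorRemainder_comp_bilin {f f' : ℝ → ℝ} (hf : ∀ t, HasDerivAt f (f' t) t)
    (B : E →L[ℝ] F →L[ℝ] ℝ) {m v : E} {n w : F} (hf' : DifferentiableAt ℝ f' (B m n))
    (hv : B v n = 0) (hw : B m w = 0) :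
    taylorRemainder (fun y => taylorRemainder (fun x => f (B x y)) m v) n w
      = f (B m n + B v w) - f (B m n) - f' (B m n) * B v w := by
  have hinner (y : F) : taylorRemainder (fun x => f (B x y)) m v
      = f (B (m + v) y) - f (B m y) - f' (B m y) * B v y := by
    simpa using taylorRemainder_comp_clm (B.flip y) (hf _) v
  have hcomp (x : E) : HasFDerivAt (fun y => f (B x y)) (f' (B x n) • B x) n :=
    (hf _).comp_hasFDerivAt n (B x).hasFDerivAt
  have hmul : HasFDerivAt (fun y => f' (B m y) * B v y) _ n :=
    (hf'.hasDerivAt.comp_hasFDerivAt n (B m).hasFDerivAt).mul (B v).hasFDerivAt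
  have hfderiv :
      fderiv ℝ (fun y => f (B (m + v) y) - f (B m y) - f' (B m y) * B v y) n w = 0 := by
    rw [(((hcomp (m + v)).fun_sub (hcomp m)).fun_sub hmul).fderiv]
    simp [hv]
  simp only [hinner]
  rw [taylorRemainder, hfderiv]
  simp [hv, hw]

end TaylorRemainder

section StandardGaussianVector

lemma integral_inner_mul_inner_stdGaussian {E : Type*} [NormedAddCommGroup E]
    [InnerProductSpace ℝ E] [FiniteDimensional ℝ E] [MeasurableSpace E] [BorelSpace E] (a b : E) :
    ∫ x, inner ℝ a x * inner ℝ b x ∂stdGaussian E = inner ℝ a b := by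
  have hmean (a : E) : ∫ x, inner ℝ a x ∂stdGaussian E = 0 :=
    integral_strongDual_stdGaussian (innerSL ℝ a)
  have hcov := covarianceBilin_apply_eq_cov (μ := stdGaussian E) IsGaussian.memLp_two_id a b
  rw [covarianceBilin_stdGaussian, covariance] at hcov
  simp only [hmean, sub_zero] at hcov
  exact hcov.symm

variable {Ω ι : Type*} [MeasurableSpace Ω] {μ : Measure Ω} [Fintype ι] {X : Ω → ι → ℝ}

lemma hasLaw_toLp_stdGaussian (hX : HasLaw X (Measure.pi fun _ : ι => gaussianReal 0 1) μ) :
    HasLaw (fun ω => WithLp.toLp 2 (X ω)) (stdGaussian (EuclideanSpace ℝ ι)) μ :=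
  HasLaw.comp ⟨by fun_prop, map_pi_eq_stdGaussian⟩ hX

lemma integral_sum_mul_stdGaussian (hX : HasLaw X (Measure.pi fun _ : ι => gaussianReal 0 1) μ)
    (a : ι → ℝ) : ∫ ω, ∑ i, X ω i * a i ∂μ = 0 := by
  have h := (hasLaw_toLp_stdGaussian hX).integral_comp
    (f := innerSL ℝ (WithLp.toLp 2 a)) (by fun_prop)
  rw [integral_strongDual_stdGaussian] at h
  simpa [Function.comp_def, PiLp.inner_apply] using h

lemma integral_sum_mul_mul_sum_mul_stdGaussian
    (hX : HasLaw X (Measure.pi fun _ : ι => gaussianReal 0 1) μ) (a b : ι → ℝ) :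
    ∫ ω, (∑ i, X ω i * a i) * ∑ i, X ω i * b i ∂μ = ∑ i, a i * b i := by
  have h := (hasLaw_toLp_stdGaussian hX).integral_comp
    (f := fun x => inner ℝ (WithLp.toLp 2 a) x * inner ℝ (WithLp.toLp 2 b) x) (by fun_prop)
  rw [integral_inner_mul_inner_stdGaussian] at h
  simpa [Function.comp_def, PiLp.inner_apply, mul_comm] using h

lemma exists_map_sum_mul_eq_gaussianReal
    (hX : HasLaw X (Measure.pi fun _ : ι => gaussianReal 0 1) μ) (a : ι → ℝ) :
    ∃ var : ℝ≥0, μ.map (fun ω => ∑ i, X ω i * a i) = gaussianReal 0 var := by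
  have h : HasGaussianLaw (fun ω => ∑ i, X ω i * a i) μ := by
    simpa [PiLp.inner_apply] using
      (hasLaw_toLp_stdGaussian hX).hasGaussianLaw.map_fun (innerSL ℝ (WithLp.toLp 2 a))
  exact ⟨_, by rw [h.map_eq_gaussianReal, integral_sum_mul_stdGaussian hX]⟩

end StandardGaussianVector

section Hamiltonian

variable {N P : ℕ} (c : ℕ → ℝ)

/-- The field `φ_i` multiplying the `i`-th coupling in the Hamiltonian,
`H_N(σ) = Σ_i g_i φ_i(σ)`. -/
def couplingField (i : GIdx N P) (σ : Fin N → ℝ) : ℝ :=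
  c i.1 * (N : ℝ) ^ (-(((i.1 : ℕ) - 1 : ℝ) / 2)) * ∏ l, σ (i.2 l)

lemma hamiltonian_eq_sum_couplingField (g : (k : ℕ) → (Fin k → Fin N) → ℝ) (σ : Fin N → ℝ) :
    hamiltonian N P c g σ = ∑ i, flatten N P g i * couplingField c i σ := by
  rw [hamiltonian, ← Finset.sum_coe_sort, Fintype.sum_sigma]
  simp only [flatten, couplingField, Finset.mul_sum, mul_left_comm]

lemma differentiable_couplingField (i : GIdx N P) : Differentiable ℝ (couplingField c i) := by
  unfold couplingField
  fun_prop

lemma sum_prod_mul_prod_eq_dotp_pow (k : ℕ) (x y : Fin N → ℝ) :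
    ∑ j : Fin k → Fin N, (∏ l, x (j l)) * ∏ l, y (j l) = dotp x y ^ k := by
  simp only [dotp, ← Finset.prod_mul_distrib, Fintype.sum_pow]

lemma sum_couplingField_mul_couplingField (hN : N ≠ 0) (x y : Fin N → ℝ) :
    ∑ i : GIdx N P, couplingField c i x * couplingField c i y
      = N * xiFun P c (dotp x y / N) := by
  have hN₀ : (0 : ℝ) < N := by exact_mod_cast Nat.pos_of_ne_zero hN
  have hscale (k : ℕ) : ((N : ℝ) ^ (-((k - 1 : ℝ) / 2))) ^ 2 = N / (N : ℝ) ^ k := by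
    have hexp : -((k - 1 : ℝ) / 2) * (2 : ℕ) = 1 - k := by push_cast; ring
    rw [← Real.rpow_mul_natCast hN₀.le, hexp, Real.rpow_sub hN₀, Real.rpow_one, Real.rpow_natCast]
  rw [xiFun, ← Finset.sum_coe_sort (Finset.Icc 2 P), Fintype.sum_sigma, Finset.mul_sum]
  refine Finset.sum_congr rfl fun k _ => ?_
  calc ∑ j, couplingField c ⟨k, j⟩ x * couplingField c ⟨k, j⟩ y
      = c k ^ 2 * ((N : ℝ) ^ (-(((k : ℕ) - 1 : ℝ) / 2))) ^ 2
          * ∑ j : Fin k → Fin N, (∏ l, x (j l)) * ∏ l, y (j l) := by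
        rw [Finset.mul_sum]
        exact Finset.sum_congr rfl fun j _ => by simp only [couplingField]; ring
    _ = N * (c k ^ 2 * (dotp x y / N) ^ (k : ℕ)) := by
        rw [sum_prod_mul_prod_eq_dotp_pow, hscale, div_pow]
        ring

lemma dotp_gradH (g : (k : ℕ) → (Fin k → Fin N) → ℝ) (m v : Fin N → ℝ) :
    dotp (gradH N P c g m) v = fderiv ℝ (hamiltonian N P c g) m v := by
  conv_rhs => rw [pi_eq_sum_univ' v, map_sum]
  simp only [dotp, gradH, map_smul, smul_eq_mul, mul_comm]

lemma taylorRemainder_hamiltonian (g : (k : ℕ) → (Fin k → Fin N) → ℝ) (m v : Fin N → ℝ) :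
    taylorRemainder (hamiltonian N P c g) m v
      = ∑ i, flatten N P g i * taylorRemainder (couplingField c i) m v := by
  rw [← taylorRemainder_sum_mul fun i => differentiable_couplingField c i m]
  simp only [← hamiltonian_eq_sum_couplingField]

lemma hasDerivAt_xiFun (x : ℝ) : HasDerivAt (xiFun P c) (xiD1 P c x) x := by
  unfold xiFun xiD1
  exact HasDerivAt.fun_sum fun k _ =>
    ((hasDerivAt_pow k x).const_mul (c k ^ 2)).congr_deriv (by ring)

lemma differentiable_xiD1 : Differentiable ℝ (xiD1 P c) := by
  unfold xiD1
  fun_prop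

lemma taylorRemainder_taylorRemainder_xiFun_dotp (hN : N ≠ 0) {q : ℝ} {m v₁ v₂ : Fin N → ℝ}
    (hm : dotp m m = N * q) (h₁ : dotp v₁ m = 0) (h₂ : dotp m v₂ = 0) :
    taylorRemainder (fun y => taylorRemainder (fun x => N * xiFun P c (dotp x y / N)) m v₁) m v₂
      = N * (xiFun P c (q + dotp v₁ v₂ / N) - xiFun P c q - xiD1 P c q * (dotp v₁ v₂ / N)) := by
  have hN₀ : (N : ℝ) ≠ 0 := Nat.cast_ne_zero.mpr hN
  have hderiv (t : ℝ) : HasDerivAt (fun t => N * xiFun P c (t / N)) (xiD1 P c (t / N)) t := by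
    have hdiv : HasDerivAt (fun t => t / (N : ℝ)) (1 / N) t := (hasDerivAt_id t).div_const _
    have hcomp := (hasDerivAt_xiFun (P := P) c (t / N)).comp t hdiv
    exact (hcomp.const_mul (N : ℝ)).congr_deriv (by field_simp)
  have hdiff : Differentiable ℝ fun t => xiD1 P c (t / N) :=
    (differentiable_xiD1 c).comp (differentiable_id.div_const _)
  let B : (Fin N → ℝ) →L[ℝ] (Fin N → ℝ) →L[ℝ] ℝ := (dotProductBilin ℝ ℝ).toContinuousBilinearMap
  have h := taylorRemainder_taylorRemainder_comp_bilin hderiv B (hdiff (B m m)) h₁ h₂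
  have hB (x y : Fin N → ℝ) : B x y = dotp x y := rfl
  simp only [hB, hm] at h
  rw [h, add_div, mul_div_cancel_left₀ q hN₀]
  field_simp

end Hamiltonian

section Covariance

variable {Ω : Type*} [MeasureSpace Ω] {N P : ℕ} {G : Ω → (k : ℕ) → (Fin k → Fin N) → ℝ}

lemma StdGaussianCouplings.hasLaw (hG : StdGaussianCouplings N P G) :
    HasLaw (fun ω => flatten N P (G ω)) (Measure.pi fun _ : GIdx N P => gaussianReal 0 1) ℙ where
  aemeasurable := AEMeasurable.of_map_ne_zero (hG ▸ IsProbabilityMeasure.ne_zero _)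
  map_eq := hG

lemma integral_taylorRemainder_hamiltonian_mul (c : ℕ → ℝ) (hG : StdGaussianCouplings N P G)
    (hN : N ≠ 0) (m₁ m₂ v₁ v₂ : Fin N → ℝ) :
    ∫ ω, taylorRemainder (hamiltonian N P c (G ω)) m₁ v₁
        * taylorRemainder (hamiltonian N P c (G ω)) m₂ v₂ ∂ℙ
      = taylorRemainder
          (fun y => taylorRemainder (fun x => N * xiFun P c (dotp x y / N)) m₁ v₁) m₂ v₂ := by
  simp only [taylorRemainder_hamiltonian]
  rw [integral_sum_mul_mul_sum_mul_stdGaussian hG.hasLaw,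
    sum_taylorRemainder_mul_taylorRemainder (fun i => differentiable_couplingField c i m₁)
      fun i => differentiable_couplingField c i m₂]
  simp only [sum_couplingField_mul_couplingField c hN]

end Covariance

theorem statement_13_general {Ω : Type*} [MeasureSpace Ω] (P : ℕ) (c : ℕ → ℝ)
    (N : ℕ) (hN : 1 ≤ N)
    (G : Ω → (k : ℕ) → (Fin k → Fin N) → ℝ) (hG : StdGaussianCouplings N P G)
    (q : ℝ) (m : Fin N → ℝ) (hm : ∑ i, (m i) ^ 2 = N * q) :
    (∀ v : Fin N → ℝ, ∃ var : ℝ≥0,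
        Measure.map (fun ω =>
            hamiltonian N P c (G ω) (m + v) - hamiltonian N P c (G ω) m
              - dotp (gradH N P c (G ω) m) v) ℙ
          = gaussianReal 0 var)
    ∧ ∀ v₁ v₂ : Fin N → ℝ, dotp v₁ m = 0 → dotp v₂ m = 0 →
        (∫ ω, (hamiltonian N P c (G ω) (m + v₁) - hamiltonian N P c (G ω) m
            - dotp (gradH N P c (G ω) m) v₁)
          * (hamiltonian N P c (G ω) (m + v₂) - hamiltonian N P c (G ω) m
            - dotp (gradH N P c (G ω) m) v₂) ∂ℙ)
        = N * (xiFun P c (q + dotp v₁ v₂ / N) - xiFun P c q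
            - xiD1 P c q * (dotp v₁ v₂ / N)) := by
  have hN₀ : N ≠ 0 := Nat.one_le_iff_ne_zero.mp hN
  have hmm : dotp m m = N * q := by simpa only [dotp, ← sq] using hm
  have hrem (ω : Ω) (v : Fin N → ℝ) :
      hamiltonian N P c (G ω) (m + v) - hamiltonian N P c (G ω) m - dotp (gradH N P c (G ω) m) v
        = taylorRemainder (hamiltonian N P c (G ω)) m v := by
    rw [dotp_gradH, taylorRemainder]
  simp only [hrem]
  refine ⟨fun v => ?_, fun v₁ v₂ h₁ h₂ => ?_⟩
  · simp only [taylorRemainder_hamiltonian]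
    exact exists_map_sum_mul_eq_gaussianReal hG.hasLaw _
  · have h₂' : dotp m v₂ = 0 := (dotProduct_comm m v₂).trans h₂
    rw [integral_taylorRemainder_hamiltonian_mul c hG hN₀,
      taylorRemainder_taylorRemainder_xiFun_dotp c hN₀ hmm h₁ h₂']

/-- the first-order Taylor remainder of `H_N` around `m`, evaluated along
directions orthogonal to `m`, is a centered Gaussian field with covariance
`N(ξ(q + ⟨v¹,v²⟩/N) - ξ(q) - ξ'(q)⟨v¹,v²⟩/N)`. -/
theorem statement_13 {Ω : Type*} [MeasureSpace Ω] [IsProbabilityMeasure (ℙ : Measure Ω)]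
    (P : ℕ) (hP : 2 ≤ P) (c : ℕ → ℝ) (hc : ∃ k ∈ Finset.Icc 2 P, c k ≠ 0)
    (N : ℕ) (hN : 1 ≤ N)
    (G : Ω → (k : ℕ) → (Fin k → Fin N) → ℝ) (hG : StdGaussianCouplings N P G)
    (q : ℝ) (hq : q ∈ Set.Icc (0 : ℝ) 1)
    (m : Fin N → ℝ) (hm : ∑ i, (m i) ^ 2 = N * q) :
    (∀ v : Fin N → ℝ, dotp v m = 0 →
      ∃ var : ℝ≥0,
        Measure.map (fun ω =>
            hamiltonian N P c (G ω) (m + v) - hamiltonian N P c (G ω) m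
              - dotp (gradH N P c (G ω) m) v) ℙ
          = gaussianReal 0 var)
    ∧ ∀ v₁ v₂ : Fin N → ℝ, dotp v₁ m = 0 → dotp v₂ m = 0 →
        (∫ ω, (hamiltonian N P c (G ω) (m + v₁) - hamiltonian N P c (G ω) m
            - dotp (gradH N P c (G ω) m) v₁)
          * (hamiltonian N P c (G ω) (m + v₂) - hamiltonian N P c (G ω) m
            - dotp (gradH N P c (G ω) m) v₂) ∂ℙ)
        = N * (xiFun P c (q + dotp v₁ v₂ / N) - xiFun P c q
            - xiD1 P c q * (dotp v₁ v₂ / N)) := by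
  have ⟨hgauss, hcov⟩ := statement_13_general P c N hN G hG q m hm
  exact ⟨fun v _ => hgauss v, hcov⟩
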